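/- Let b ≥ 2 be an integer and let P = { 1 - k + 2πim/log b : m ∈ ℤ, and k = 0, k = 1, or k an even integer ≥ 2 }. There exists a function F : ℂ → ℂ such that: (i) F is analytic (complex differentiable) at every point of ℂ \ P; (ii) F(s) = ∑_{n=1}^∞ d_b(n) n^{-s} for every s with Re(s) > 1; (iii) (s-1)² F(s) → (b-1)/(2 log b) as s → 1 (s ≠ 1), and ((s-1)² F(s) - (b-1)/(2 log b))/(s-1) → ((b-1)/(2 log b)) log(2π) - (b+1)/4 as s → 1; (iv) for every nonzero m ∈ ℤ, with p = 1 + 2πim/log b, (s - p) F(s) → -((b-1)/(2πim)) ζ(2πim/log b) as s → p (s ≠ p); (v) for every m ∈ ℤ and every k with k = 1 or k an even integer ≥ 2, with p = 1 - k + 2πim/log b, (s - p) F(s) → (-1)^{k+1} ((b-1)/log b) ζ(2πim/log b) (B_k / k!) ∏_{j=1}^{k-1} (2πim/log b - j) as s → p (s ≠ p). -/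

import Mathlib

open Filter Topology

noncomputable section

/-- The base-`b` digit sum of `n`. -/
def digitSum (b n : ℕ) : ℕ := (Nat.digits b n).sum

lemma digitSum_step (b : ℕ) (hb : 2 ≤ b) (n r : ℕ) (hr : r < b) :
    digitSum b (r + b * n) = r + digitSum b n := by
  unfold digitSum
  by_cases h : r ≠ 0 ∨ n ≠ 0
  · rw [Nat.digits_add b (by omega) r n hr h]; simp
  · push Not at h
    obtain ⟨rfl, rfl⟩ := h
    simp

lemma digitSum_le_log (b : ℕ) (hb : 2 ≤ b) (n : ℕ) :
    digitSum b n ≤ b * (Nat.log b n + 1) := by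
  unfold digitSum
  have h1 : (Nat.digits b n).sum ≤ (Nat.digits b n).length * b := by
    have := List.sum_le_card_nsmul (Nat.digits b n) b
      (fun x hx => (Nat.digits_lt_base (by omega) hx).le)
    simpa using this
  have h2 : (Nat.digits b n).length ≤ Nat.log b n + 1 := by
    rw [Nat.digits_length_le_iff (by omega)]
    exact Nat.lt_pow_succ_log_self (by omega) n
  calc _ ≤ _ := h1
    _ ≤ (Nat.log b n + 1) * b := Nat.mul_le_mul_right _ h2
    _ = _ := mul_comm _ _

lemma digitSum_bound (b : ℕ) (hb : 2 ≤ b) (ε : ℝ) (hε : 0 < ε) :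
    ∃ C : ℝ, ∀ n : ℕ, (digitSum b (n + 1) : ℝ) ≤ C * ((n : ℝ) + 1) ^ ε := by
  have hL : 0 < Real.log b := Real.log_pos (by exact_mod_cast hb)
  refine ⟨b * (1 / ε / Real.log b + 1), fun n => ?_⟩
  have hn : (1 : ℝ) ≤ (n : ℝ) + 1 := by
    have : (0 : ℝ) ≤ n := n.cast_nonneg
    linarith
  have h1 : (digitSum b (n + 1) : ℝ) ≤ b * ((Nat.log b (n + 1) : ℝ) + 1) := by
    exact_mod_cast digitSum_le_log b hb (n + 1)
  have h2 : (Nat.log b (n + 1) : ℝ) ≤ Real.log ((n : ℝ) + 1) / Real.log b := by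
    have := Real.natLog_le_logb (n + 1) b
    simpa [Real.logb] using this
  have h3 : Real.log ((n : ℝ) + 1) ≤ ((n : ℝ) + 1) ^ ε / ε :=
    Real.log_le_rpow_div (by linarith) hε
  have h4 : (1 : ℝ) ≤ ((n : ℝ) + 1) ^ ε := Real.one_le_rpow hn hε.le
  calc (digitSum b (n + 1) : ℝ) ≤ b * ((Nat.log b (n + 1) : ℝ) + 1) := h1
    _ ≤ b * ((((n : ℝ) + 1) ^ ε / ε) / Real.log b + ((n : ℝ) + 1) ^ ε) := by
        gcongr
        exact h2.trans (by gcongr)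
    _ = _ := by ring

lemma digitSum_summable (b : ℕ) (hb : 2 ≤ b) (σ : ℝ) (hσ : 1 < σ) :
    Summable fun n : ℕ => (digitSum b (n + 1) : ℝ) * ((n : ℝ) + 1) ^ (-σ) := by
  obtain ⟨C, hC⟩ := digitSum_bound b hb ((σ - 1) / 2) (by linarith)
  have hs : Summable fun n : ℕ => C * ((n : ℝ) + 1) ^ (-(σ + 1) / 2) := by
    apply Summable.mul_left
    have := (summable_nat_add_iff 1).2
      (Real.summable_nat_rpow.2 (show -(σ + 1) / 2 < -1 by linarith))
    simpa using this
  refine Summable.of_nonneg_of_le (fun n => by positivity) (fun n => ?_) hs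
  have hn : (0 : ℝ) < (n : ℝ) + 1 := by positivity
  calc _ ≤ C * ((n : ℝ) + 1) ^ ((σ - 1) / 2) * ((n : ℝ) + 1) ^ (-σ) := by
        gcongr; exact hC n
    _ = _ := by
        rw [mul_assoc, ← Real.rpow_add hn]; congr 2; ring

/-- Euler-Maclaurin remainder integral. -/
def emI (K : ℕ) (s : ℂ) (n : ℕ) : ℂ :=
  ∫ x in (0 : ℝ)..1, ((bernoulliFun K x / (K.factorial : ℝ) : ℝ) : ℂ) *
    (((n : ℝ) + 1 + x : ℝ) : ℂ) ^ (-s - K)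

lemma ofReal_cpow_hasDerivAt (n : ℕ) (w : ℂ) (x : ℝ) (hx : 0 ≤ x) :
    HasDerivAt (fun x : ℝ => (((n : ℝ) + 1 + x : ℝ) : ℂ) ^ w)
      (w * (((n : ℝ) + 1 + x : ℝ) : ℂ) ^ (w - 1)) x := by
  have hpos : 0 < (n : ℝ) + 1 + x := by positivity
  have h1 : HasDerivAt (fun y : ℂ => y ^ w) (w * (((n : ℝ) + 1 + x : ℝ) : ℂ) ^ (w - 1))
      (((n : ℝ) + 1 + x : ℝ) : ℂ) := by
    have := (hasDerivAt_id (((n : ℝ) + 1 + x : ℝ) : ℂ)).cpow_const (c := w)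
      (Complex.ofReal_mem_slitPlane.2 hpos)
    simpa using this
  have h2 : HasDerivAt (fun x : ℝ => (((n : ℝ) + 1 + x : ℝ) : ℂ)) 1 x := by
    have := ((hasDerivAt_id x).const_add ((n : ℝ) + 1)).ofReal_comp
    simpa using this
  have h3 := h1.comp x h2
  rw [mul_one] at h3
  exact h3

lemma em_cont (n : ℕ) :
    ContinuousOn (fun p : ℂ × ℝ => (((n : ℝ) + 1 + p.2 : ℝ) : ℂ) ^ p.1)
      (Set.univ ×ˢ Set.Ici (0:ℝ)) := by
  apply ContinuousOn.cpow
  · fun_prop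
  · fun_prop
  · rintro ⟨w, x⟩ ⟨-, hx⟩
    have hx : (0 : ℝ) ≤ x := hx
    exact Complex.ofReal_mem_slitPlane.2 (by positivity)

lemma em_cont1 (n : ℕ) (w : ℂ) :
    ContinuousOn (fun x : ℝ => (((n : ℝ) + 1 + x : ℝ) : ℂ) ^ w) (Set.Ici (0:ℝ)) :=
  fun x hx => (ofReal_cpow_hasDerivAt n w x hx).continuousAt.continuousWithinAt

lemma uIcc_sub : Set.uIcc (0:ℝ) 1 ⊆ Set.Ici 0 := by
  rw [Set.uIcc_of_le zero_le_one]; exact fun x hx => hx.1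

lemma uIoc_sub : Set.uIoc (0:ℝ) 1 ⊆ Set.Ici 0 := by
  rw [Set.uIoc_of_le zero_le_one]; exact fun x hx => hx.1.le

lemma em_contB (K n : ℕ) (w : ℂ) :
    ContinuousOn (fun x : ℝ => ((bernoulliFun K x / (K.factorial : ℝ) : ℝ) : ℂ) *
      (((n : ℝ) + 1 + x : ℝ) : ℂ) ^ w) (Set.Ici (0:ℝ)) := by
  apply ContinuousOn.mul _ (em_cont1 n w)
  have := continuous_bernoulliFun K
  fun_prop

lemma bernoulliFun_one' (k : ℕ) : bernoulliFun k 1 = ((bernoulli' k : ℚ) : ℝ) := by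
  rw [bernoulliFun, Polynomial.eval_one_map, Polynomial.bernoulli_eval_one, eq_ratCast]

lemma emI_rec (K : ℕ) (s : ℂ) (n : ℕ) :
    emI K s n = (((bernoulli' (K + 1) : ℚ) : ℂ) * ((n : ℂ) + 2) ^ (-s - K)
      - ((bernoulli (K + 1) : ℚ) : ℂ) * ((n : ℂ) + 1) ^ (-s - K)) / ((K + 1).factorial : ℂ)
      + (s + K) * emI (K + 1) s n := by
  have hu : ∀ x ∈ Set.uIcc (0:ℝ) 1, HasDerivAt
      (fun x : ℝ => ((bernoulliFun (K+1) x / ((K+1).factorial : ℝ) : ℝ) : ℂ))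
      ((bernoulliFun K x / (K.factorial : ℝ) : ℝ) : ℂ) x := by
    intro x hx
    have := ((hasDerivAt_bernoulliFun (K+1) x).div_const ((K+1).factorial : ℝ)).ofReal_comp
    convert this using 1
    rw [Nat.factorial_succ]
    congr 1
    have : (K.factorial : ℝ) ≠ 0 := by positivity
    push_cast
    field_simp
  have hv : ∀ x ∈ Set.uIcc (0:ℝ) 1, HasDerivAt
      (fun x : ℝ => (((n : ℝ) + 1 + x : ℝ) : ℂ) ^ (-s - K))
      ((-s - K) * (((n : ℝ) + 1 + x : ℝ) : ℂ) ^ (-s - K - 1)) x :=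
    fun x hx => ofReal_cpow_hasDerivAt n _ x (uIcc_sub hx)
  have key := intervalIntegral.integral_mul_deriv_eq_deriv_mul hu hv ?_ ?_
  · have h1 : (∫ x in (0:ℝ)..1, ((bernoulliFun (K+1) x / ((K+1).factorial : ℝ) : ℝ) : ℂ) *
        ((-s - K) * (((n : ℝ) + 1 + x : ℝ) : ℂ) ^ (-s - K - 1)))
        = - (s + K) * emI (K+1) s n := by
      unfold emI
      rw [← intervalIntegral.integral_const_mul]
      congr 1
      ext x
      have : -s - ((K + 1 : ℕ) : ℂ) = -s - K - 1 := by push_cast; ring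
      rw [this]; ring
    rw [h1, bernoulliFun_one', bernoulliFun_eval_zero] at key
    have h2 : emI K s n = ∫ x in (0 : ℝ)..1, ((bernoulliFun K x / (K.factorial : ℝ) : ℝ) : ℂ) *
      (((n : ℝ) + 1 + x : ℝ) : ℂ) ^ (-s - K) := rfl
    rw [← h2] at key
    push_cast at key
    rw [show (n : ℂ) + 1 + 1 = n + 2 by ring, add_zero] at key
    linear_combination key
  · apply Continuous.intervalIntegrable
    have := continuous_bernoulliFun K
    fun_prop
  · apply ContinuousOn.intervalIntegrable
    exact continuousOn_const.mul ((em_cont1 n _).mono uIcc_sub)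

lemma emI_zero (w : ℂ) (n : ℕ) :
    w * emI 0 (w + 1) n = ((n : ℂ) + 1) ^ (-w) - ((n : ℂ) + 2) ^ (-w) := by
  have := intervalIntegral.integral_eq_sub_of_hasDerivAt (a := 0) (b := 1)
    (fun x hx => ofReal_cpow_hasDerivAt n (-w) x (uIcc_sub hx)) ?_
  · unfold emI
    rw [intervalIntegral.integral_const_mul] at this
    simp only [bernoulliFun_zero, Nat.factorial_zero, Nat.cast_one, div_one, Complex.ofReal_one,
      one_mul, Nat.cast_zero, sub_zero]
    rw [show -(w + 1) = -w - 1 by ring]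
    push_cast at this
    rw [show (n : ℂ) + 1 + 1 = n + 2 by ring, add_zero] at this
    push_cast
    linear_combination -this
  · apply ContinuousOn.intervalIntegrable
    exact continuousOn_const.mul ((em_cont1 n _).mono uIcc_sub)

lemma emI_bound (K : ℕ) : ∃ C : ℝ, 0 ≤ C ∧ ∀ (s : ℂ) (n : ℕ), 0 ≤ s.re + K →
    ‖emI K s n‖ ≤ C * ((n : ℝ) + 1) ^ (-(s.re + K)) := by
  obtain ⟨C, hC⟩ := (isCompact_Icc (a := (0:ℝ)) (b := 1)).exists_bound_of_continuousOn
    (f := fun x => bernoulliFun K x / (K.factorial : ℝ))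
    (by have := continuous_bernoulliFun K; fun_prop)
  have hC0 : 0 ≤ C := (norm_nonneg _).trans (hC 0 (by simp))
  refine ⟨C, hC0, fun s n hs => ?_⟩
  have := intervalIntegral.norm_integral_le_of_norm_le_const (a := (0:ℝ)) (b := 1)
    (C := C * ((n : ℝ) + 1) ^ (-(s.re + K)))
    (f := fun x => ((bernoulliFun K x / (K.factorial : ℝ) : ℝ) : ℂ) *
    (((n : ℝ) + 1 + x : ℝ) : ℂ) ^ (-s - K)) ?_
  · simpa [emI] using this
  · intro x hx
    have hx0 : (0:ℝ) ≤ x := uIoc_sub hx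
    rw [Set.uIoc_of_le zero_le_one] at hx
    have hpos : 0 < (n : ℝ) + 1 + x := by positivity
    rw [norm_mul, Complex.norm_cpow_eq_rpow_re_of_pos hpos, Complex.norm_real]
    have h1 : (-s - (K:ℂ)).re = -(s.re + K) := by simp; ring
    rw [h1]
    apply mul_le_mul (hC x ⟨hx0, hx.2⟩) _ (by positivity) hC0
    apply Real.rpow_le_rpow_of_nonpos (by positivity) (by linarith) (by linarith)

lemma emI_differentiable (K n : ℕ) : Differentiable ℂ fun s => emI K s n := by
  intro s₀
  have hc : ContinuousOn (fun p : ℂ × ℝ => ((bernoulliFun K p.2 / (K.factorial : ℝ) : ℝ) : ℂ) *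
      ((((n : ℝ) + 1 + p.2 : ℝ) : ℂ) ^ (-p.1 - K) * Complex.log (((n : ℝ) + 1 + p.2 : ℝ) : ℂ) * (-1)))
      (Set.univ ×ˢ Set.Ici (0:ℝ)) := by
    have := continuous_bernoulliFun K
    apply ContinuousOn.mul
    · fun_prop
    apply ContinuousOn.mul _ continuousOn_const
    apply ContinuousOn.mul
    · exact (em_cont n).comp (f := fun p : ℂ × ℝ => (-p.1 - K, p.2)) (by fun_prop)
        (fun p hp => ⟨trivial, hp.2⟩)
    · apply ContinuousOn.clog
      · fun_prop
      · rintro ⟨w, x⟩ ⟨-, hx⟩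
        have hx : (0 : ℝ) ≤ x := hx
        exact Complex.ofReal_mem_slitPlane.2 (by positivity)
  obtain ⟨C, hC⟩ := ((isCompact_closedBall s₀ 1).prod
    (isCompact_Icc (a := (0:ℝ)) (b := 1))).exists_bound_of_continuousOn
    (hc.mono (Set.prod_mono (Set.subset_univ _) (fun x hx => hx.1)))
  have hI : Set.uIoc (0:ℝ) 1 ⊆ Set.Icc 0 1 := by
    rw [Set.uIoc_of_le zero_le_one]; exact Set.Ioc_subset_Icc_self
  refine (intervalIntegral.hasDerivAt_integral_of_dominated_loc_of_deriv_le
    (F := fun (s : ℂ) (x : ℝ) => ((bernoulliFun K x / (K.factorial : ℝ) : ℝ) : ℂ) *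
    (((n : ℝ) + 1 + x : ℝ) : ℂ) ^ (-s - K))
    (F' := fun (s : ℂ) (x : ℝ) => ((bernoulliFun K x / (K.factorial : ℝ) : ℝ) : ℂ) *
      ((((n : ℝ) + 1 + x : ℝ) : ℂ) ^ (-s - K) * Complex.log (((n : ℝ) + 1 + x : ℝ) : ℂ) * (-1)))
    (bound := fun _ => C)
    (Metric.closedBall_mem_nhds s₀ one_pos) ?_ ?_ ?_ ?_ ?_ ?_).2.differentiableAt
  · refine Eventually.of_forall fun s => ?_
    exact ((em_contB K n _).mono uIoc_sub).aestronglyMeasurable measurableSet_uIoc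
  · exact ((em_contB K n _).mono uIcc_sub).intervalIntegrable
  · refine ContinuousOn.aestronglyMeasurable ?_ measurableSet_uIoc
    exact hc.comp (f := fun x : ℝ => (s₀, x)) (by fun_prop) (fun x hx => ⟨trivial, uIoc_sub hx⟩)
  · exact Eventually.of_forall fun x hx s hs => hC (s, x) ⟨hs, hI hx⟩
  · exact intervalIntegrable_const
  · refine Eventually.of_forall fun x hx s hs => ?_
    have hx0 : (0:ℝ) ≤ x := uIoc_sub hx
    have hne : (((n : ℝ) + 1 + x : ℝ) : ℂ) ≠ 0 := by
      rw [Complex.ofReal_ne_zero]; positivity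
    have h := (((hasDerivAt_id s).neg.sub_const (K:ℂ)).const_cpow (Or.inl hne)).const_mul
      ((bernoulliFun K x / (K.factorial : ℝ) : ℝ) : ℂ)
    exact h

/-- The remainder sums. -/
def emR (b K : ℕ) (s : ℂ) : ℂ := ∑' n : ℕ, (digitSum b (n + 1) : ℂ) * emI K s n

lemma emR_summable (b : ℕ) (hb : 2 ≤ b) (K : ℕ) (s : ℂ) (hs : 1 < s.re + K) :
    Summable fun n : ℕ => (digitSum b (n + 1) : ℂ) * emI K s n := by
  obtain ⟨C, hC0, hC⟩ := emI_bound K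
  refine Summable.of_norm_bounded ((digitSum_summable b hb (s.re + K) hs).mul_left C) fun n => ?_
  rw [norm_mul, Complex.norm_natCast]
  calc _ ≤ (digitSum b (n+1) : ℝ) * (C * ((n : ℝ) + 1) ^ (-(s.re + K))) := by
        gcongr; exact hC s n (by linarith)
    _ = _ := by ring

lemma emR_differentiableAt (b : ℕ) (hb : 2 ≤ b) (K : ℕ) (s : ℂ) (hs : 1 < s.re + K) :
    DifferentiableAt ℂ (emR b K) s := by
  obtain ⟨C, hC0, hC⟩ := emI_bound K
  obtain ⟨σ, h1, h2⟩ := exists_between hs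
  have hopen : IsOpen {z : ℂ | σ < z.re + K} :=
    isOpen_lt continuous_const (by fun_prop)
  have := Complex.differentiableOn_tsum_of_summable_norm
    (F := fun n s => (digitSum b (n + 1) : ℂ) * emI K s n)
    (U := {z : ℂ | σ < z.re + K})
    ((digitSum_summable b hb σ h1).mul_left C)
    (fun n => ((emI_differentiable K n).const_mul _).differentiableOn) hopen
    (fun n w hw => by
      have hw : σ < w.re + K := hw
      have hn : (1 : ℝ) ≤ (n : ℝ) + 1 := by
        have : (0 : ℝ) ≤ n := n.cast_nonneg
        linarith
      rw [norm_mul, Complex.norm_natCast]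
      calc _ ≤ (digitSum b (n+1) : ℝ) * (C * ((n : ℝ) + 1) ^ (-(w.re + K))) := by
            gcongr; exact hC w n (by linarith)
        _ ≤ (digitSum b (n+1) : ℝ) * (C * ((n : ℝ) + 1) ^ (-σ)) := by
            gcongr
        _ = _ := by ring)
  exact this.differentiableAt (hopen.mem_nhds h2)

lemma cpow_natCast_pos_differentiable (b : ℕ) (hb : 2 ≤ b) :
    Differentiable ℂ fun z : ℂ => (b : ℂ) ^ z := by
  have : (b : ℂ) ≠ 0 := by exact_mod_cast (by omega : b ≠ 0)
  intro z
  exact (differentiableAt_id).const_cpow (Or.inl this)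

lemma dslope_cpow_differentiable (b : ℕ) (hb : 2 ≤ b) (c : ℂ) :
    Differentiable ℂ (dslope (fun z : ℂ => (b : ℂ) ^ z) c) := by
  rw [← differentiableOn_univ, Complex.differentiableOn_dslope Filter.univ_mem]
  exact (cpow_natCast_pos_differentiable b hb).differentiableOn

/-- The continuation of `∑ (d(n) - d(n-1)) n^{-w}`. -/
def Zf (b : ℕ) (w : ℂ) : ℂ :=
  riemannZeta₁ w * dslope (fun z : ℂ => (b : ℂ) ^ z) 1 w / ((b : ℂ) ^ w - 1)

lemma Zf_differentiableAt (b : ℕ) (hb : 2 ≤ b) (w : ℂ) (hw : (b : ℂ) ^ w ≠ 1) :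
    DifferentiableAt ℂ (Zf b) w := by
  have h1 := dslope_cpow_differentiable b hb 1 w
  have h2 := cpow_natCast_pos_differentiable b hb w
  have h3 := differentiable_riemannZeta₁ w
  exact (h3.mul h1).div (h2.sub_const 1) (sub_ne_zero.2 hw)

lemma Zf_num (b : ℕ) (w : ℂ) (hw : w ≠ 1) :
    riemannZeta₁ w * dslope (fun z : ℂ => (b : ℂ) ^ z) 1 w =
      riemannZeta w * ((b : ℂ) ^ w - b) := by
  rw [dslope_of_ne _ hw, slope_def_field, riemannZeta_eq_inv_sub_mul hw]
  simp only [Complex.cpow_one]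
  ring

lemma cpow_ne_one_of_re_pos (b : ℕ) (hb : 2 ≤ b) (w : ℂ) (hw : w.re ≠ 0) :
    (b : ℂ) ^ w ≠ 1 := by
  intro h
  have h1 := congrArg norm h
  rw [Complex.norm_natCast_cpow_of_pos (by omega), norm_one] at h1
  have hb1 : (1 : ℝ) < b := by exact_mod_cast hb
  rcases lt_or_gt_of_ne hw with h2 | h2
  · exact absurd h1 (Real.rpow_lt_one_of_one_lt_of_neg hb1 h2).ne
  · exact absurd h1 (Real.one_lt_rpow hb1 h2).ne'

lemma series_summable (b : ℕ) (hb : 2 ≤ b) (w : ℂ) (hw : 1 < w.re) :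
    Summable fun n : ℕ => (digitSum b (n + 1) : ℂ) * ((n : ℂ) + 1) ^ (-w) := by
  refine Summable.of_norm_bounded (digitSum_summable b hb w.re hw) fun n => ?_
  rw [norm_mul, Complex.norm_natCast]
  have : ((n : ℂ) + 1) = ((n + 1 : ℕ) : ℂ) := by push_cast; rfl
  rw [this, Complex.norm_natCast_cpow_of_pos (by omega)]
  simp

lemma delta_sum (b : ℕ) (hb : 2 ≤ b) (w : ℂ) (hw : 1 < w.re) :
    ((b : ℂ) ^ w - 1) * (∑' n : ℕ, ((digitSum b (n + 1) : ℂ) - digitSum b n) * ((n : ℂ) + 1) ^ (-w))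
      = riemannZeta w * ((b : ℂ) ^ w - b) ∧
    Summable (fun n : ℕ => (digitSum b n : ℂ) * ((n : ℂ) + 1) ^ (-w)) := by
  have hbne : (b : ℂ) ≠ 0 := by exact_mod_cast (by omega : b ≠ 0)
  have s1 := series_summable b hb w hw
  have s2 : Summable (fun n : ℕ => (digitSum b n : ℂ) * ((n : ℂ) + 1) ^ (-w)) := by
    rw [← summable_nat_add_iff 1]
    refine Summable.of_norm_bounded (digitSum_summable b hb w.re hw) fun n => ?_
    rw [norm_mul, Complex.norm_natCast]
    have : (((n + 1 : ℕ) : ℂ) + 1) = ((n + 2 : ℕ) : ℂ) := by push_cast; ring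
    rw [this, Complex.norm_natCast_cpow_of_pos (by omega)]
    gcongr
    rw [Complex.neg_re]
    apply Real.rpow_le_rpow_of_nonpos (by positivity) (by push_cast; linarith) (by linarith)
  refine ⟨?_, s2⟩
  have s3 : Summable (fun n : ℕ => ((digitSum b (n + 1) : ℂ) - digitSum b n) *
      ((n : ℂ) + 1) ^ (-w)) := by
    simpa [sub_mul] using s1.sub s2
  have s4 : Summable (fun n : ℕ => ((n : ℂ) + 1) ^ (-w)) := by
    have := (summable_nat_add_iff 1).2 (Complex.summable_one_div_nat_cpow.2 hw)
    simpa [Complex.cpow_neg] using this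
  have hz : riemannZeta w = ∑' n : ℕ, ((n : ℂ) + 1) ^ (-w) := by
    rw [zeta_eq_tsum_one_div_nat_add_one_cpow hw]
    simp [Complex.cpow_neg]
  set S := ∑' n : ℕ, ((digitSum b (n + 1) : ℂ) - digitSum b n) * ((n : ℂ) + 1) ^ (-w) with hS
  have e1 : S - riemannZeta w = ∑' n : ℕ, ((digitSum b (n + 1) : ℂ) - digitSum b n - 1) *
      ((n : ℂ) + 1) ^ (-w) := by
    rw [hz, hS, ← s3.tsum_sub s4]
    congr 1; ext n; ring
  have hinj : Function.Injective fun j : ℕ => (b - 1) + b * j := by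
    intro i j hij
    have : b * i = b * j := by simpa using hij
    exact Nat.eq_of_mul_eq_mul_left (by omega) this
  have e2 : ∑' j : ℕ, ((digitSum b ((b - 1) + b * j + 1) : ℂ) - digitSum b ((b - 1) + b * j) - 1) *
      ((((b - 1) + b * j : ℕ) : ℂ) + 1) ^ (-w) = S - riemannZeta w := by
    rw [e1]
    refine hinj.tsum_eq (f := fun n : ℕ => ((digitSum b (n + 1) : ℂ) - digitSum b n - 1) *
      ((n : ℂ) + 1) ^ (-w)) ?_
    intro n hn
    by_contra hcon
    apply hn
    have hr : n % b < b - 1 := by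
      have h1 : n % b < b := Nat.mod_lt _ (by omega)
      have h2 : n % b ≠ b - 1 := by
        intro h
        apply hcon
        refine ⟨n / b, ?_⟩
        simp only
        rw [← h]; exact Nat.mod_add_div n b
      omega
    have h3 := digitSum_step b hb (n / b) (n % b) (by omega)
    have h4 := digitSum_step b hb (n / b) (n % b + 1) (by omega)
    rw [Nat.mod_add_div] at h3
    rw [show n % b + 1 + b * (n / b) = n + 1 by have := Nat.mod_add_div n b; omega] at h4
    simp only [h3, h4]
    push_cast; ring
  have e3 : ∀ j : ℕ, ((digitSum b ((b - 1) + b * j + 1) : ℂ) - digitSum b ((b - 1) + b * j) - 1) *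
      ((((b - 1) + b * j : ℕ) : ℂ) + 1) ^ (-w) =
      (b : ℂ) ^ (-w) * ((((digitSum b (j + 1) : ℂ) - digitSum b j) * ((j : ℂ) + 1) ^ (-w))
        - b * ((j : ℂ) + 1) ^ (-w)) := by
    intro j
    have h3 := digitSum_step b hb j (b - 1) (by omega)
    have h4 := digitSum_step b hb (j + 1) 0 (by omega)
    have h5 : b - 1 + b * j + 1 = 0 + b * (j + 1) := by
      rw [Nat.mul_add]; omega
    rw [h5, h4, h3]
    have h6 : (((b - 1) + b * j : ℕ) : ℂ) + 1 = ((b : ℕ) : ℂ) * ((j + 1 : ℕ) : ℂ) := by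
      have : (b - 1) + b * j + 1 = b * (j + 1) := by rw [h5]; ring
      exact_mod_cast this
    rw [h6, Complex.natCast_mul_natCast_cpow, Nat.cast_add, Nat.cast_add, Nat.cast_sub (by omega)]
    push_cast
    ring
  rw [tsum_congr e3, tsum_mul_left, s3.tsum_sub (s4.mul_left _), tsum_mul_left, ← hz, ← hS] at e2
  have hc : (b : ℂ) ^ (-w) * (b : ℂ) ^ w = 1 := by
    rw [← Complex.cpow_add _ _ hbne]; simp
  linear_combination (-(b : ℂ) ^ w) * e2 + (S - b * riemannZeta w) * hc

lemma abel1 (b : ℕ) (hb : 2 ≤ b) (w : ℂ) (hw : 1 < w.re) :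
    w * emR b 0 (w + 1) * ((b : ℂ) ^ w - 1) = riemannZeta w * ((b : ℂ) ^ w - b) := by
  obtain ⟨h1, h2⟩ := delta_sum b hb w hw
  rw [← h1, mul_comm]
  congr 1
  have s1 := series_summable b hb w hw
  have e : emR b 0 (w + 1) = ∑' n : ℕ, (digitSum b (n + 1) : ℂ) * emI 0 (w + 1) n := rfl
  rw [e, ← tsum_mul_left]
  simp only [sub_mul]
  rw [s1.tsum_sub h2, h2.tsum_eq_zero_add]
  have h3 := (summable_nat_add_iff 1).2 h2
  have : digitSum b 0 = 0 := by simp [digitSum]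
  rw [this, Nat.cast_zero, zero_mul, zero_add, ← s1.tsum_sub h3]
  refine tsum_congr fun n => ?_
  have := emI_zero w n
  push_cast
  rw [show (n : ℂ) + 1 + 1 = n + 2 by ring]
  linear_combination (digitSum b (n + 1) : ℂ) * this

lemma abel2 (b : ℕ) (hb : 2 ≤ b) (w : ℂ) (hw : 0 < w.re) :
    w * emR b 0 (w + 1) = Zf b w := by
  have hopen : IsOpen {z : ℂ | 0 < z.re} := isOpen_lt continuous_const Complex.continuous_re
  have hf : AnalyticOnNhd ℂ (fun w : ℂ => w * emR b 0 (w + 1) * ((b : ℂ) ^ w - 1))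
      {z : ℂ | 0 < z.re} := by
    refine DifferentiableOn.analyticOnNhd (fun z hz => ?_) hopen
    have hz : 0 < z.re := hz
    apply DifferentiableAt.differentiableWithinAt
    have h1 : DifferentiableAt ℂ (fun w : ℂ => emR b 0 (w + 1)) z :=
      DifferentiableAt.comp z (f := fun w : ℂ => w + 1) (emR_differentiableAt b hb 0 (z + 1) (by simp; linarith))
        (by fun_prop)
    have h2 := cpow_natCast_pos_differentiable b hb z
    exact (differentiableAt_id.mul h1).mul (h2.sub_const 1)
  have hg : AnalyticOnNhd ℂ (fun w : ℂ => riemannZeta₁ w *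
      dslope (fun z : ℂ => (b : ℂ) ^ z) 1 w) {z : ℂ | 0 < z.re} := by
    refine DifferentiableOn.analyticOnNhd (fun z hz => ?_) hopen
    exact (differentiable_riemannZeta₁.mul
      (dslope_cpow_differentiable b hb 1)).differentiableAt.differentiableWithinAt
  have hev : (fun w : ℂ => w * emR b 0 (w + 1) * ((b : ℂ) ^ w - 1)) =ᶠ[𝓝 (2 : ℂ)]
      (fun w : ℂ => riemannZeta₁ w * dslope (fun z : ℂ => (b : ℂ) ^ z) 1 w) := by
    have : {z : ℂ | 1 < z.re} ∈ 𝓝 (2 : ℂ) :=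
      (isOpen_lt continuous_const Complex.continuous_re).mem_nhds (by simp)
    filter_upwards [this] with z hz
    have hz : 1 < z.re := hz
    rw [abel1 b hb z hz, Zf_num]
    rintro rfl
    simp at hz
  have hconv : IsPreconnected {z : ℂ | 0 < z.re} := (convex_halfSpace_re_gt 0).isPreconnected
  have := hf.eqOn_of_preconnected_of_eventuallyEq hg hconv (z₀ := 2) (by simp) hev hw
  simp only at this
  have hne := sub_ne_zero.2 (cpow_ne_one_of_re_pos b hb w hw.ne')
  rw [Zf, ← this]
  field_simp

lemma abel3 (b : ℕ) (hb : 2 ≤ b) (w : ℂ) (hw : 0 < w.re) :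
    HasSum (fun n : ℕ => (digitSum b (n + 1) : ℂ) * (((n : ℂ) + 1) ^ (-w) - ((n : ℂ) + 2) ^ (-w)))
      (Zf b w) := by
  have h := (emR_summable b hb 0 (w + 1) (by simp; linarith)).hasSum.mul_left w
  rw [← abel2 b hb w hw]
  convert! h using 1
  ext n
  rw [← emI_zero]; ring

/-- Rising product. -/
def risePr (k : ℕ) (s : ℂ) : ℂ := ∏ j ∈ Finset.range k, (s + j)

lemma risePr_differentiable (k : ℕ) : Differentiable ℂ (risePr k) := by
  unfold risePr
  fun_prop

/-- Bernoulli coefficients. -/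
def bcoef (k : ℕ) : ℂ := ((bernoulli' k : ℚ) : ℂ) / (k.factorial : ℂ)

/-- The level `K` continuation. -/
def FK (b K : ℕ) (s : ℂ) : ℂ :=
  Zf b (s - 1) / (s - 1) + ∑ k ∈ Finset.range K, bcoef (k + 1) * risePr k s * Zf b (s + k)
    - risePr K s * emR b K s

lemma emR_rec (b : ℕ) (hb : 2 ≤ b) (K : ℕ) (hK : 1 ≤ K) (s : ℂ) (hs : 1 < s.re + K) :
    emR b K s = - bcoef (K + 1) * Zf b (s + K) + (s + K) * emR b (K + 1) s := by
  have h1 := (abel3 b hb (s + K) (by simp; linarith)).mul_left (- bcoef (K + 1))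
  have h2 := (emR_summable b hb (K + 1) s (by push_cast; linarith)).hasSum.mul_left (s + K)
  have h3 := h1.add h2
  refine Eq.trans ?_ h3.tsum_eq
  unfold emR
  refine tsum_congr fun n => ?_
  rw [emI_rec K s n, bernoulli_eq_bernoulli'_of_ne_one (by omega : K + 1 ≠ 1), bcoef,
    show -(s + (K:ℂ)) = -s - K by ring]
  ring

lemma FK_succ (b : ℕ) (hb : 2 ≤ b) (K : ℕ) (hK : 1 ≤ K) (s : ℂ) (hs : 1 < s.re + K) :
    FK b (K + 1) s = FK b K s := by
  have h1 := emR_rec b hb K hK s hs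
  have h2 : risePr (K + 1) s = risePr K s * (s + K) := by
    simp [risePr, Finset.prod_range_succ]
  unfold FK
  rw [Finset.sum_range_succ, h2, h1]
  ring

lemma FK_add (b : ℕ) (hb : 2 ≤ b) (K : ℕ) (hK : 1 ≤ K) (s : ℂ) (hs : 1 < s.re + K) (j : ℕ) :
    FK b (K + j) s = FK b K s := by
  induction j with
  | zero => rfl
  | succ j ih =>
    rw [← ih, ← add_assoc]
    apply FK_succ b hb _ (by omega)
    have : (0 : ℝ) ≤ j := j.cast_nonneg
    push_cast; linarith

lemma FK_one (b : ℕ) (hb : 2 ≤ b) (s : ℂ) (hs : 1 < s.re) :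
    FK b 1 s = ∑' n : ℕ, (digitSum b (n + 1) : ℂ) * ((n + 1 : ℕ) : ℂ) ^ (-s) := by
  have hne : s - 1 ≠ 0 := by
    intro h
    rw [sub_eq_zero.1 h] at hs
    simp at hs
  have h0 := (emR_summable b hb 0 s (by simpa using hs)).hasSum
  have h1 := (emR_summable b hb 1 s (by push_cast; linarith)).hasSum.mul_left s
  have h2 := (abel3 b hb s (by linarith)).mul_left (1 / 2 : ℂ)
  have h3 := (h0.add h2).sub h1
  have h4 : Zf b (s - 1) / (s - 1) = emR b 0 s := by
    rw [← abel2 b hb (s - 1) (by simp; linarith), sub_add_cancel]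
    field_simp
  have h5 : FK b 1 s = emR b 0 s + 1 / 2 * Zf b s - s * emR b 1 s := by
    unfold FK
    rw [h4]
    simp [risePr, bcoef]
  rw [h5]
  refine Eq.trans h3.tsum_eq.symm (tsum_congr fun n => ?_)
  have := emI_rec 0 s n
  simp at this
  rw [this]
  push_cast
  ring

/-- The continuation. -/
def FF (b : ℕ) (s : ℂ) : ℂ := FK b (⌊1 - s.re⌋₊ + 1) s

lemma FF_eq (b : ℕ) (hb : 2 ≤ b) (K : ℕ) (hK : 1 ≤ K) (s : ℂ) (hs : 1 < s.re + K) :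
    FF b s = FK b K s := by
  have h1 : ⌊1 - s.re⌋₊ < K := by
    rw [Nat.floor_lt' (by omega)]; linarith
  obtain ⟨j, rfl⟩ := Nat.exists_eq_add_of_lt h1
  have h2 := Nat.lt_floor_add_one (1 - s.re)
  rw [FF, show ⌊1 - s.re⌋₊ + j + 1 = (⌊1 - s.re⌋₊ + 1) + j by ring]
  refine (FK_add b hb _ (by omega) s ?_ j).symm
  push_cast; linarith

lemma FF_ev (b : ℕ) (hb : 2 ≤ b) (K : ℕ) (hK : 1 ≤ K) (s : ℂ) (hs : 1 < s.re + K) :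
    FF b =ᶠ[𝓝 s] FK b K := by
  have hopen : IsOpen {z : ℂ | 1 < z.re + K} := isOpen_lt continuous_const (by fun_prop)
  filter_upwards [hopen.mem_nhds hs] with z hz
  exact FF_eq b hb K hK z hz

lemma cpow_eq_one_iff' (b : ℕ) (hb : 2 ≤ b) (w : ℂ) :
    (b : ℂ) ^ w = 1 ↔ ∃ m : ℤ, w = 2 * Real.pi * Complex.I * m / Real.log b := by
  have hbne : (b : ℂ) ≠ 0 := by exact_mod_cast (by omega : b ≠ 0)
  have hL : (Real.log b : ℂ) ≠ 0 := by
    rw [Complex.ofReal_ne_zero]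
    exact (Real.log_pos (by exact_mod_cast hb)).ne'
  rw [Complex.cpow_def_of_ne_zero hbne, Complex.exp_eq_one_iff, ← Complex.natCast_log]
  refine exists_congr fun m => ?_
  rw [eq_div_iff hL]
  constructor <;> intro h <;> linear_combination h

lemma term_differentiableAt (b : ℕ) (hb : 2 ≤ b) (k : ℕ) (s : ℂ) (h : (b : ℂ) ^ (s + k) ≠ 1) :
    DifferentiableAt ℂ (fun s => bcoef (k + 1) * risePr k s * Zf b (s + k)) s := by
  have h1 := risePr_differentiable k s
  have h2 : DifferentiableAt ℂ (fun s : ℂ => Zf b (s + k)) s :=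
    DifferentiableAt.comp s (f := fun s : ℂ => s + k) (Zf_differentiableAt b hb _ h) (by fun_prop)
  exact (h1.const_mul _).mul h2

lemma term0_differentiableAt (b : ℕ) (hb : 2 ≤ b) (s : ℂ) (h : (b : ℂ) ^ (s - 1) ≠ 1) :
    DifferentiableAt ℂ (fun s => Zf b (s - 1) / (s - 1)) s := by
  have h2 : DifferentiableAt ℂ (fun s : ℂ => Zf b (s - 1)) s :=
    DifferentiableAt.comp s (f := fun s : ℂ => s - 1) (Zf_differentiableAt b hb _ h) (by fun_prop)
  refine h2.div (by fun_prop) ?_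
  intro h3
  rw [h3] at h
  simp at h

lemma rem_differentiableAt (b : ℕ) (hb : 2 ≤ b) (K : ℕ) (s : ℂ) (hs : 1 < s.re + K) :
    DifferentiableAt ℂ (fun s => risePr K s * emR b K s) s :=
  (risePr_differentiable K s).mul (emR_differentiableAt b hb K s hs)

lemma FF_differentiableAt (b : ℕ) (hb : 2 ≤ b) (s : ℂ)
    (hs : s ∉ {z : ℂ | ∃ m : ℤ, ∃ k : ℕ, (k = 0 ∨ k = 1 ∨ (Even k ∧ 2 ≤ k)) ∧
              z = 1 - (k : ℂ) + 2 * Real.pi * Complex.I * m / Real.log b}) :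
    DifferentiableAt ℂ (FF b) s := by
  obtain ⟨K, hK1, hK⟩ : ∃ K : ℕ, 1 ≤ K ∧ 1 < s.re + K := by
    refine ⟨⌊1 - s.re⌋₊ + 1, by omega, ?_⟩
    have h2 := Nat.lt_floor_add_one (1 - s.re)
    push_cast; linarith
  refine DifferentiableAt.congr_of_eventuallyEq ?_ (FF_ev b hb K hK1 s hK)
  unfold FK
  refine ((term0_differentiableAt b hb s ?_).add (DifferentiableAt.fun_sum fun k _ => ?_)).sub
    (rem_differentiableAt b hb K s hK)
  · intro h
    obtain ⟨m, hm⟩ := (cpow_eq_one_iff' b hb _).1 h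
    exact hs ⟨m, 0, Or.inl rfl, by rw [← hm]; push_cast; ring⟩
  · by_cases h : (b : ℂ) ^ (s + k) = 1
    · obtain ⟨m, hm⟩ := (cpow_eq_one_iff' b hb _).1 h
      have hk : ¬ (k + 1 = 0 ∨ k + 1 = 1 ∨ (Even (k + 1) ∧ 2 ≤ k + 1)) := fun hk =>
        hs ⟨m, k + 1, hk, by rw [← hm]; push_cast; ring⟩
      push Not at hk
      have hodd : Odd (k + 1) := by
        rw [← Nat.not_even_iff_odd]
        intro he
        have := hk.2.2 he
        omega
      have : bcoef (k + 1) = 0 := by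
        rw [bcoef, bernoulli'_eq_zero_of_odd hodd (by omega)]; simp
      simp [this]
    · exact term_differentiableAt b hb k s h

lemma tendsto_mul_zero {f : ℂ → ℂ} {p : ℂ} (hf : DifferentiableAt ℂ f p) :
    Tendsto (fun s => (s - p) * f s) (𝓝[≠] p) (𝓝 0) := by
  have h1 : ContinuousAt (fun s => (s - p) * f s) p :=
    (by fun_prop : ContinuousAt (fun s => s - p) p).mul hf.continuousAt
  have := h1.tendsto.mono_left (nhdsWithin_le_nhds (s := {p}ᶜ))
  simpa using this

lemma Zf_residue (b : ℕ) (hb : 2 ≤ b) (w₀ : ℂ) (h : (b : ℂ) ^ w₀ = 1) :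
    Tendsto (fun w => (w - w₀) * Zf b w) (𝓝[≠] w₀)
      (𝓝 (riemannZeta w₀ * (1 - b) / Real.log b)) := by
  have hbne : (b : ℂ) ≠ 0 := by exact_mod_cast (by omega : b ≠ 0)
  have hL : (Real.log b : ℂ) ≠ 0 := by
    rw [Complex.ofReal_ne_zero]
    exact (Real.log_pos (by exact_mod_cast hb)).ne'
  have hw1 : w₀ ≠ 1 := by
    rintro rfl
    exact cpow_ne_one_of_re_pos b hb 1 (by simp) h
  have hd : HasDerivAt (fun z : ℂ => (b : ℂ) ^ z) (Real.log b) w₀ := by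
    have := (hasDerivAt_id w₀).const_cpow (c := (b : ℂ)) (Or.inl hbne)
    simpa [h, ← Complex.natCast_log] using this
  have h1 := (hasDerivAt_iff_tendsto_slope.1 hd).inv₀ hL
  have hnum : Tendsto (fun w => riemannZeta₁ w * dslope (fun z : ℂ => (b : ℂ) ^ z) 1 w)
      (𝓝[≠] w₀) (𝓝 (riemannZeta w₀ * (1 - b))) := by
    have := (differentiable_riemannZeta₁.mul
      (dslope_cpow_differentiable b hb 1)).continuous.continuousAt (x := w₀)
    have h2 := this.tendsto.mono_left (nhdsWithin_le_nhds (s := {w₀}ᶜ))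
    simp only [Pi.mul_apply] at h2
    rw [Zf_num b w₀ hw1, h] at h2
    exact h2
  have h3 := hnum.mul h1
  rw [← div_eq_mul_inv] at h3
  refine h3.congr fun w => ?_
  rw [slope_def_field, h, Zf, inv_div]
  ring

lemma tendsto_shift (p c : ℂ) : Tendsto (fun s : ℂ => s + c) (𝓝[≠] p) (𝓝[≠] (p + c)) := by
  refine tendsto_nhdsWithin_iff.2 ⟨?_, ?_⟩
  · exact ((by fun_prop : Continuous fun s : ℂ => s + c).tendsto p).mono_left nhdsWithin_le_nhds
  · filter_upwards [self_mem_nhdsWithin] with s hs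
    simpa using hs

lemma lattice_re (b : ℕ) (m : ℤ) :
    (2 * Real.pi * Complex.I * m / Real.log b : ℂ).re = 0 := by
  rw [Complex.div_ofReal_re]
  simp

lemma FF_residue_zero (b : ℕ) (hb : 2 ≤ b) (w : ℂ) (hre : w.re = 0) (h : (b : ℂ) ^ w = 1)
    (hw : w ≠ 0) :
    Tendsto (fun s => (s - (1 + w)) * FF b s) (𝓝[≠] (1 + w))
      (𝓝 (riemannZeta w * (1 - b) / Real.log b / w)) := by
  have hs : 1 < (1 + w).re + (1 : ℕ) := by simp [hre]
  have hev := (FF_ev b hb 1 le_rfl (1 + w) hs).filter_mono (nhdsWithin_le_nhds (s := {1 + w}ᶜ))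
  have h0 : Tendsto (fun s => (s - (1 + w)) * (Zf b (s - 1) / (s - 1))) (𝓝[≠] (1 + w))
      (𝓝 (riemannZeta w * (1 - b) / Real.log b / w)) := by
    have h1 := (Zf_residue b hb w h)
    have h2 := tendsto_shift (1 + w) (-1)
    rw [show 1 + w + -1 = w by ring] at h2
    have h3 := h1.comp h2
    have h4 : Tendsto (fun s : ℂ => s - 1) (𝓝[≠] (1 + w)) (𝓝 w) := by
      have : ContinuousAt (fun s : ℂ => s - 1) (1 + w) := by fun_prop
      have h5 := this.tendsto.mono_left (nhdsWithin_le_nhds (s := {1 + w}ᶜ))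
      simpa using h5
    refine (h3.div h4 hw).congr fun s => ?_
    simp only [Function.comp_apply, Pi.div_apply]
    rw [show s + -1 = s - 1 by ring]
    ring
  have h1 := tendsto_mul_zero (term_differentiableAt b hb 0 (1 + w)
    (cpow_ne_one_of_re_pos b hb _ (by simp [hre])))
  have h2 := tendsto_mul_zero (rem_differentiableAt b hb 1 (1 + w) hs)
  have h3 := (h0.add h1).sub h2
  rw [add_zero, sub_zero] at h3
  refine h3.congr' ?_
  filter_upwards [hev] with s hs
  rw [hs]
  simp only [FK, Finset.sum_range_one]
  ring

lemma FF_residue_succ (b : ℕ) (hb : 2 ≤ b) (w : ℂ) (hre : w.re = 0) (h : (b : ℂ) ^ w = 1)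
    (k₀ : ℕ) :
    Tendsto (fun s => (s - (w - k₀)) * FF b s) (𝓝[≠] (w - k₀))
      (𝓝 (bcoef (k₀ + 1) * risePr k₀ (w - k₀) * (riemannZeta w * (1 - b) / Real.log b))) := by
  have hs : 1 < (w - k₀).re + (k₀ + 2 : ℕ) := by simp [hre]
  have hev := (FF_ev b hb (k₀ + 2) (by omega) (w - k₀) hs).filter_mono
    (nhdsWithin_le_nhds (s := {w - (k₀ : ℂ)}ᶜ))
  have h0 := tendsto_mul_zero (term0_differentiableAt b hb (w - k₀)
    (cpow_ne_one_of_re_pos b hb _ (by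
      have : (0:ℝ) ≤ k₀ := k₀.cast_nonneg
      simp [hre]; linarith)))
  have h2 := tendsto_mul_zero (rem_differentiableAt b hb (k₀ + 2) (w - k₀) hs)
  have h1 : ∀ k ∈ Finset.range (k₀ + 2), Tendsto
      (fun s => (s - (w - k₀)) * (bcoef (k + 1) * risePr k s * Zf b (s + k))) (𝓝[≠] (w - k₀))
      (𝓝 (if k = k₀ then
        bcoef (k₀ + 1) * risePr k₀ (w - k₀) * (riemannZeta w * (1 - b) / Real.log b) else 0)) := by
    intro k _
    split_ifs with hk
    · subst hk
      have h3 := tendsto_shift (w - k) k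
      rw [sub_add_cancel] at h3
      have h4 := (Zf_residue b hb w h).comp h3
      have h5 := ((risePr_differentiable k).const_mul
        (bcoef (k + 1))).continuous.continuousAt (x := w - k)
      have h6 := h5.tendsto.mono_left (nhdsWithin_le_nhds (s := {w - (k : ℂ)}ᶜ))
      refine (h6.mul h4).congr fun s => ?_
      simp only [Function.comp_apply]
      ring
    · refine tendsto_mul_zero (term_differentiableAt b hb k (w - k₀)
        (cpow_ne_one_of_re_pos b hb _ ?_))
      have : (k : ℝ) ≠ k₀ := by exact_mod_cast hk
      simp [hre]
      intro h; apply this; linarith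
  have h3 := (h0.add (tendsto_finsetSum _ h1)).sub h2
  rw [zero_add, sub_zero, Finset.sum_ite_eq' _ k₀, if_pos (by simp)] at h3
  refine h3.congr' ?_
  filter_upwards [hev] with s hs
  rw [hs]
  simp only [FK]
  rw [mul_sub, mul_add, Finset.mul_sum]

lemma dslope_deriv (b : ℕ) (hb : 2 ≤ b) :
    dslope (fun z : ℂ => (b : ℂ) ^ z) 0 0 = Real.log b ∧
    HasDerivAt (dslope (fun z : ℂ => (b : ℂ) ^ z) 0) ((Real.log b : ℂ) ^ 2 / 2) 0 := by
  have hbne : (b : ℂ) ≠ 0 := by exact_mod_cast (by omega : b ≠ 0)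
  have hd : ∀ w : ℂ, HasDerivAt (fun z : ℂ => (b : ℂ) ^ z) (b ^ w * Real.log b) w := by
    intro w
    have := (hasDerivAt_id w).const_cpow (c := (b : ℂ)) (Or.inl hbne)
    simpa [← Complex.natCast_log] using this
  set D := dslope (fun z : ℂ => (b : ℂ) ^ z) 0 with hDdef
  have hD : Differentiable ℂ D := dslope_cpow_differentiable b hb 0
  have hD2 : Differentiable ℂ (deriv D) := by
    have h1 := (hD.differentiableOn (s := Set.univ)).deriv isOpen_univ
    exact differentiableOn_univ.1 h1
  have hmul : ∀ t : ℂ, t * D t = (b : ℂ) ^ t - 1 := by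
    intro t
    have := sub_smul_dslope (fun z : ℂ => (b : ℂ) ^ z) 0 t
    simpa using this
  refine ⟨?_, ?_⟩
  · rw [hDdef, dslope_same, (hd 0).deriv]; simp
  · have h1 : ∀ t : ℂ, D t + t * deriv D t = (b : ℂ) ^ t * Real.log b := by
      intro t
      have e1 := (hasDerivAt_id t).mul (hD t).hasDerivAt
      have e2 := (hd t).sub_const 1
      have e3 : (id * D) = fun z : ℂ => (b : ℂ) ^ z - 1 := by
        ext z; exact hmul z
      rw [e3] at e1
      have := e1.unique e2
      simpa using this
    have e1 := (hD 0).hasDerivAt.add ((hasDerivAt_id (0:ℂ)).mul (hD2 0).hasDerivAt)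
    have e2 := (hd 0).mul_const (Real.log b : ℂ)
    have e3 : (D + id * deriv D) = fun z : ℂ => (b : ℂ) ^ z * Real.log b := by
      ext z; exact h1 z
    rw [e3] at e1
    have e4 := e1.unique e2
    simp only [id, one_mul, zero_mul, add_zero, Complex.cpow_zero] at e4
    have e5 := (hD 0).hasDerivAt
    convert! e5 using 1
    linear_combination (-1 / 2) * e4

lemma H_deriv (b : ℕ) (hb : 2 ≤ b) :
    HasDerivAt (fun t : ℂ => riemannZeta t * ((b : ℂ) ^ t - b) /
      dslope (fun z : ℂ => (b : ℂ) ^ z) 0 t)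
      ((((b : ℂ) - 1) / (2 * Real.log b)) * Real.log (2 * Real.pi) - ((b : ℂ) + 1) / 4) 0 := by
  have hbne : (b : ℂ) ≠ 0 := by exact_mod_cast (by omega : b ≠ 0)
  have hL : (Real.log b : ℂ) ≠ 0 := by
    rw [Complex.ofReal_ne_zero]
    exact (Real.log_pos (by exact_mod_cast hb)).ne'
  obtain ⟨h1, h2⟩ := dslope_deriv b hb
  have hd : HasDerivAt (fun z : ℂ => (b : ℂ) ^ z) (Real.log b) 0 := by
    have := (hasDerivAt_id (0:ℂ)).const_cpow (c := (b : ℂ)) (Or.inl hbne)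
    simpa [← Complex.natCast_log] using this
  have hz : HasDerivAt riemannZeta (-Real.log (2 * Real.pi) / 2 : ℂ) 0 := by
    have := (differentiableAt_riemannZeta (s := 0) (by simp)).hasDerivAt
    rw [deriv_riemannZeta_zero] at this
    rw [Complex.ofReal_log (by positivity)]
    simpa using this
  have h3 := (hz.mul (hd.sub_const (b : ℂ))).div h2 (by rw [h1]; exact hL)
  convert! h3 using 1
  simp only [Pi.mul_apply, h1, riemannZeta_zero, Complex.cpow_zero]
  field_simp
  ring

lemma FF_one (b : ℕ) (hb : 2 ≤ b) :
    Tendsto (fun s : ℂ => (s - 1) ^ 2 * FF b s) (𝓝[≠] (1 : ℂ))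
        (𝓝 (((b : ℂ) - 1) / (2 * Real.log b))) ∧
    Tendsto (fun s : ℂ => ((s - 1) ^ 2 * FF b s - ((b : ℂ) - 1) / (2 * Real.log b)) / (s - 1))
        (𝓝[≠] (1 : ℂ))
        (𝓝 ((((b : ℂ) - 1) / (2 * Real.log b)) * Real.log (2 * Real.pi)
            - ((b : ℂ) + 1) / 4)) := by
  have hs : 1 < (1 : ℂ).re + (1 : ℕ) := by simp
  have hev := (FF_ev b hb 1 le_rfl 1 hs).filter_mono (nhdsWithin_le_nhds (s := {(1:ℂ)}ᶜ))
  have hH := H_deriv b hb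
  set H : ℂ → ℂ := fun t : ℂ => riemannZeta t * ((b : ℂ) ^ t - b) /
      dslope (fun z : ℂ => (b : ℂ) ^ z) 0 t with hHdef
  have hH0 : H 0 = ((b : ℂ) - 1) / (2 * Real.log b) := by
    simp only [hHdef]
    rw [(dslope_deriv b hb).1, riemannZeta_zero, Complex.cpow_zero]
    ring
  have hG := (term_differentiableAt b hb 0 1
    (cpow_ne_one_of_re_pos b hb _ (by simp))).sub (rem_differentiableAt b hb 1 1 hs)
  set G : ℂ → ℂ := (fun s => bcoef (0 + 1) * risePr 0 s * Zf b (s + (0 : ℕ))) -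
    (fun s => risePr 1 s * emR b 1 s) with hGdef
  have hQ : HasDerivAt (fun s => H (s - 1) + (s - 1) ^ 2 * G s)
      ((((b : ℂ) - 1) / (2 * Real.log b)) * Real.log (2 * Real.pi) - ((b : ℂ) + 1) / 4) 1 := by
    have e1 : HasDerivAt (fun s : ℂ => H (s - 1)) _ 1 :=
      HasDerivAt.comp_sub_const 1 1 (by rw [sub_self]; exact hH)
    have e2 := (((hasDerivAt_id (1:ℂ)).sub_const 1).pow 2).mul hG.hasDerivAt
    have e3 := e1.add e2
    convert! e3 using 1
    simp
  have hQ1 : H (1 - 1) + (1 - 1) ^ 2 * G 1 = ((b : ℂ) - 1) / (2 * Real.log b) := by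
    simp [hH0]
  have hne2 : ∀ᶠ s : ℂ in 𝓝[≠] 1, s ≠ 2 :=
    (eventually_ne_nhds (by norm_num : (1:ℂ) ≠ 2)).filter_mono nhdsWithin_le_nhds
  have heq : ∀ᶠ s : ℂ in 𝓝[≠] 1, H (s - 1) + (s - 1) ^ 2 * G s = (s - 1) ^ 2 * FF b s := by
    filter_upwards [hev, hne2, self_mem_nhdsWithin] with s h1 h2 h3
    have h3 : s ≠ 1 := h3
    have h4 : s - 1 ≠ 0 := sub_ne_zero.2 h3
    have h5 : s - 1 ≠ 1 := fun h => h2 (by linear_combination h)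
    rw [h1]
    have h6 : H (s - 1) = (s - 1) * Zf b (s - 1) := by
      simp only [hHdef]
      rw [Zf, Zf_num b _ h5, dslope_of_ne _ h4, slope_def_field, Complex.cpow_zero, sub_zero,
        div_div_eq_mul_div]
      ring
    rw [h6]
    simp only [FK, hGdef, Finset.sum_range_one, Pi.sub_apply]
    field_simp
    ring
  constructor
  · have := hQ.continuousAt.tendsto.mono_left (nhdsWithin_le_nhds (s := {(1:ℂ)}ᶜ))
    rw [hQ1] at this
    exact this.congr' heq
  · have := hasDerivAt_iff_tendsto_slope.1 hQ
    refine this.congr' ?_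
    filter_upwards [heq] with s h1
    rw [slope_def_field, hQ1, h1]

lemma risePr_eq (w : ℂ) (k : ℕ) :
    risePr k (w - k) = ∏ j ∈ Finset.Icc 1 k, (w - (j : ℂ)) := by
  rw [risePr, ← Finset.prod_range_reflect]
  have : Finset.Icc 1 k = Finset.Ico 1 (k + 1) := rfl
  rw [this, Finset.prod_Ico_eq_prod_range]
  refine Finset.prod_congr rfl fun j hj => ?_
  have hj := Finset.mem_range.1 hj
  have : ((k - 1 - j : ℕ) : ℂ) = k - 1 - j := by
    rw [Nat.cast_sub (by omega), Nat.cast_sub (by omega)]; simp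
  rw [this]
  push_cast
  ring

theorem Fb_meromorphic_continuation (b : ℕ) (hb : 2 ≤ b) :
    ∃ F : ℂ → ℂ,
      -- (i) analytic off the half-lattice of possible poles
      (∀ s : ℂ,
        s ∉ {z : ℂ | ∃ m : ℤ, ∃ k : ℕ, (k = 0 ∨ k = 1 ∨ (Even k ∧ 2 ≤ k)) ∧
              z = 1 - (k : ℂ) + 2 * Real.pi * Complex.I * m / Real.log b} →
        DifferentiableAt ℂ F s) ∧
      -- (ii) agrees with the Dirichlet series for Re(s) > 1
      (∀ s : ℂ, 1 < s.re →
        F s = ∑' n : ℕ, (digitSum b (n + 1) : ℂ) * ((n + 1 : ℕ) : ℂ) ^ (-s)) ∧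
      -- (iii) double pole at s = 1 with the stated Laurent expansion
      (Filter.Tendsto (fun s : ℂ => (s - 1) ^ 2 * F s) (𝓝[≠] (1 : ℂ))
        (𝓝 (((b : ℂ) - 1) / (2 * Real.log b))) ∧
       Filter.Tendsto
        (fun s : ℂ => ((s - 1) ^ 2 * F s - ((b : ℂ) - 1) / (2 * Real.log b)) / (s - 1))
        (𝓝[≠] (1 : ℂ))
        (𝓝 ((((b : ℂ) - 1) / (2 * Real.log b)) * Real.log (2 * Real.pi)
            - ((b : ℂ) + 1) / 4))) ∧
      -- (iv) simple poles at s = 1 + 2πim/log b, m ≠ 0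
      (∀ m : ℤ, m ≠ 0 →
        Filter.Tendsto
          (fun s : ℂ => (s - (1 + 2 * Real.pi * Complex.I * m / Real.log b)) * F s)
          (𝓝[≠] (1 + 2 * Real.pi * Complex.I * m / Real.log b))
          (𝓝 (-(((b : ℂ) - 1) / (2 * Real.pi * Complex.I * m)) *
            riemannZeta (2 * Real.pi * Complex.I * m / Real.log b)))) ∧
      -- (v) simple poles at s = 1 - k + 2πim/log b, k = 1 or k even ≥ 2
      (∀ m : ℤ, ∀ k : ℕ, (k = 1 ∨ (Even k ∧ 2 ≤ k)) →
        Filter.Tendsto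
          (fun s : ℂ =>
            (s - (1 - (k : ℂ) + 2 * Real.pi * Complex.I * m / Real.log b)) * F s)
          (𝓝[≠] (1 - (k : ℂ) + 2 * Real.pi * Complex.I * m / Real.log b))
          (𝓝 ((-1 : ℂ) ^ (k + 1) * (((b : ℂ) - 1) / Real.log b) *
            riemannZeta (2 * Real.pi * Complex.I * m / Real.log b) *
            ((bernoulli k : ℂ) / (Nat.factorial k : ℂ)) *
            ∏ j ∈ Finset.Icc 1 (k - 1),
              (2 * Real.pi * Complex.I * m / Real.log b - (j : ℂ))))) := by
  refine ⟨FF b, FF_differentiableAt b hb, fun s hs => ?_, FF_one b hb, fun m hm => ?_,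
    fun m k hk => ?_⟩
  · rw [FF_eq b hb 1 le_rfl s (by push_cast; linarith), FK_one b hb s hs]
  · have hL : (Real.log b : ℂ) ≠ 0 := by
      rw [Complex.ofReal_ne_zero]
      exact (Real.log_pos (by exact_mod_cast hb)).ne'
    have hpi : (Real.pi : ℂ) ≠ 0 := by
      rw [Complex.ofReal_ne_zero]; exact Real.pi_ne_zero
    have hm' : (m : ℂ) ≠ 0 := by exact_mod_cast hm
    have hw : (2 * Real.pi * Complex.I * m / Real.log b : ℂ) ≠ 0 := by
      have := Complex.I_ne_zero
      simp only [ne_eq, div_eq_zero_iff, mul_eq_zero, not_or]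
      exact ⟨⟨⟨⟨two_ne_zero, hpi⟩, this⟩, hm'⟩, hL⟩
    have h := FF_residue_zero b hb _ (lattice_re b m) ((cpow_eq_one_iff' b hb _).2 ⟨m, rfl⟩) hw
    convert h using 2
    have := Complex.I_ne_zero
    generalize riemannZeta (2 * Real.pi * Complex.I * m / Real.log b) = Z
    generalize (Real.log b : ℂ) = L at *
    field_simp
    ring
  · obtain ⟨k₀, rfl⟩ : ∃ k₀, k = k₀ + 1 := ⟨k - 1, by omega⟩
    have h := FF_residue_succ b hb _ (lattice_re b m) ((cpow_eq_one_iff' b hb _).2 ⟨m, rfl⟩) k₀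
    rw [risePr_eq] at h
    generalize (2 * Real.pi * Complex.I * m / Real.log b : ℂ) = w at h ⊢
    have hp : 1 - ((k₀ + 1 : ℕ) : ℂ) + w = w - k₀ := by push_cast; ring
    rw [hp, Nat.add_sub_cancel]
    convert h using 2
    rw [bcoef, bernoulli'_eq_bernoulli]
    push_cast
    ring
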